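/- With Q, q, q^c_η as above, ‖q^c_η − q‖²_{L²(ℝⁿ)} ≤ √(2π)ⁿ · N(Q) · (Σ_I a_I² I!) · e^{−(1/2)(c/(2η))²}, where N(Q) is the number of monomials of Q. -/

import Mathlib

open scoped RealInnerProductSpace
noncomputable section

/-- The Fourier transform with the convention `F(f)(ξ) = ∫ e^{-i⟨x,ξ⟩} f(x) dx`. -/
def Fn {n : ℕ} (f : EuclideanSpace ℝ (Fin n) → ℂ) (ξ : EuclideanSpace ℝ (Fin n)) : ℂ :=
  ∫ x : EuclideanSpace ℝ (Fin n), Complex.exp (-Complex.I * (⟪x, ξ⟫ : ℝ)) * f x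


lemma aux_pow_gauss (r : ℝ) (hr : 0 ≤ r) (m : ℕ) :
    (1 + r) ^ m * Real.exp (-r ^ 2 / 2) ≤ m.factorial * Real.exp (3 / 2) := by
  have h := Real.pow_div_factorial_le_exp (1 + r) (by linarith) m
  have hm : (0:ℝ) < m.factorial := by positivity
  rw [div_le_iff₀ hm] at h
  calc (1 + r) ^ m * Real.exp (-r ^ 2 / 2)
      ≤ (Real.exp (1 + r) * m.factorial) * Real.exp (-r ^ 2 / 2) := by gcongr
    _ = m.factorial * Real.exp ((1 + r) + -r ^ 2 / 2) := by
        rw [Real.exp_add (1 + r)]; ring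
    _ ≤ _ := by
      gcongr
      nlinarith [sq_nonneg (r - 1)]

lemma gauss_schwartz (n : ℕ) : ∃ G : SchwartzMap (EuclideanSpace ℝ (Fin n)) ℝ,
    ∀ x, G x = Real.exp (-‖x‖ ^ 2 / 2) := by
  let f : EuclideanSpace ℝ (Fin n) → ℝ := fun x => (-1 / 2 : ℝ) * ‖x‖ ^ 2
  have hf : f.HasTemperateGrowth :=
    (Function.HasTemperateGrowth.const (-1 / 2 : ℝ)).mul (Function.hasTemperateGrowth_norm_sq _)
  have hfe : ∀ x, f x = -‖x‖ ^ 2 / 2 := fun x => by simp only [f]; ring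
  refine ⟨⟨Real.exp ∘ f, Real.contDiff_exp.comp hf.1, ?_⟩, fun x => ?_⟩
  · intro k m
    obtain ⟨l, C, hC, hb⟩ := hf.norm_iteratedFDeriv_le_uniform m
    refine ⟨m.factorial * (1 + C) ^ m * ((k + l * m).factorial * Real.exp (3 / 2)), fun x => ?_⟩
    have h1 := norm_iteratedFDeriv_comp_le (𝕜 := ℝ) (n := m) (N := ((⊤ : ℕ∞) : WithTop ℕ∞))
      (Real.contDiff_exp) (hf.1) (by exact_mod_cast le_top) x
      (C := Real.exp (f x)) (D := (1 + C) * (1 + ‖x‖) ^ l)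
      (by
        intro i _
        rw [norm_iteratedFDeriv_eq_norm_iteratedDeriv, iteratedDeriv_eq_iterate,
          Real.iter_deriv_exp]
        simp)
      (by
        intro i hi him
        have h1x : (1:ℝ) ≤ (1 + ‖x‖) ^ l := one_le_pow₀ (by linarith [norm_nonneg x])
        have : (1:ℝ) ≤ (1 + C) * (1 + ‖x‖) ^ l := by nlinarith
        calc _ ≤ C * (1 + ‖x‖) ^ l := hb i him x
          _ ≤ (1 + C) * (1 + ‖x‖) ^ l := by gcongr; linarith
          _ ≤ _ := le_self_pow₀ this (by omega))
    have h2 := aux_pow_gauss ‖x‖ (norm_nonneg x) (k + l * m)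
    calc ‖x‖ ^ k * ‖iteratedFDeriv ℝ m (Real.exp ∘ f) x‖
        ≤ (1 + ‖x‖) ^ k * (m.factorial * Real.exp (f x) * ((1 + C) * (1 + ‖x‖) ^ l) ^ m) := by
          gcongr; linarith
      _ = m.factorial * (1 + C) ^ m * ((1 + ‖x‖) ^ (k + l * m) * Real.exp (-‖x‖ ^ 2 / 2)) := by
          rw [hfe, mul_pow, ← pow_mul, pow_add]; ring
      _ ≤ _ := by gcongr
  · change Real.exp (f x) = _
    rw [hfe]

lemma integrable_poly_gauss (P : Polynomial ℝ) :
    MeasureTheory.Integrable (fun x : ℝ => P.eval x * Real.exp (-x ^ 2 / 2)) := by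
  induction P using Polynomial.induction_on' with
  | add p q hp hq => 
    refine (hp.add hq).congr (Filter.Eventually.of_forall fun x => ?_)
    simp [add_mul]
  | monomial k a =>
    have := integrable_rpow_mul_exp_neg_mul_sq (b := 1 / 2) (by norm_num) (s := k)
      (by have : (0:ℝ) ≤ k := by positivity
          linarith)
    refine (this.const_mul a).congr (Filter.Eventually.of_forall fun x => ?_)
    simp only [Polynomial.eval_monomial, Real.rpow_natCast]
    rw [show -(1 / 2) * x ^ 2 = -x ^ 2 / 2 by ring]; ring

def Hm (k : ℕ) : Polynomial ℝ := (Polynomial.hermite k).map (Int.castRingHom ℝ)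

lemma Hm_zero : Hm 0 = 1 := by simp [Hm]
lemma Hm_succ (k : ℕ) : Hm (k + 1) = Polynomial.X * Hm k - Polynomial.derivative (Hm k) := by
  simp [Hm, Polynomial.hermite_succ, Polynomial.derivative_map]
lemma Hm_deriv (k : ℕ) : Polynomial.derivative (Hm (k + 1)) = (k + 1 : ℝ) • Hm k := by
  induction k with
  | zero => simp [Hm_succ, Hm_zero]
  | succ k ih =>
    rw [Hm_succ (k + 1)]
    simp only [Polynomial.derivative_sub, Polynomial.derivative_mul, Polynomial.derivative_X, ih,
      Polynomial.derivative_smul]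
    rw [Hm_succ k]
    simp only [Polynomial.smul_eq_C_mul]
    push_cast
    simp only [map_add, map_one, Polynomial.C_eq_natCast]
    ring

lemma hasDerivAt_gauss (x : ℝ) :
    HasDerivAt (fun x : ℝ => Real.exp (-x ^ 2 / 2)) (-x * Real.exp (-x ^ 2 / 2)) x := by
  have h : HasDerivAt (fun x : ℝ => -x ^ 2 / 2) (-x) x := by
    convert! ((hasDerivAt_pow 2 x).neg.div_const 2) using 1
    norm_num
    ring
  convert! h.exp using 1
  ring

lemma hasDerivAt_Hm_gauss (k : ℕ) (x : ℝ) :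
    HasDerivAt (fun x : ℝ => (Hm k).eval x * Real.exp (-x ^ 2 / 2))
      (-((Hm (k + 1)).eval x * Real.exp (-x ^ 2 / 2))) x := by
  convert! ((Hm k).hasDerivAt x).mul (hasDerivAt_gauss x) using 1
  rw [Hm_succ]; simp; ring

lemma integral_Hm_sq (k : ℕ) :
    ∫ x : ℝ, ((Hm k).eval x) ^ 2 * Real.exp (-x ^ 2 / 2) =
      k.factorial * Real.sqrt (2 * Real.pi) := by
  induction k with
  | zero =>
    have := integral_gaussian (1 / 2)
    simp only [Hm_zero, Polynomial.eval_one, one_pow, one_mul, Nat.factorial_zero, Nat.cast_one]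
    rw [show (2 * Real.pi) = Real.pi / (1 / 2) by ring, ← this]
    congr 1; ext x; congr 1; ring
  | succ k ih =>
    have h := MeasureTheory.integral_mul_deriv_eq_deriv_mul_of_integrable
      (u := fun x : ℝ => (Hm (k + 1)).eval x)
      (v := fun x : ℝ => (Hm k).eval x * Real.exp (-x ^ 2 / 2))
      (u' := fun x : ℝ => (Polynomial.derivative (Hm (k + 1))).eval x)
      (v' := fun x : ℝ => -((Hm (k + 1)).eval x * Real.exp (-x ^ 2 / 2)))
      (fun x _ => (Hm (k + 1)).hasDerivAt x) (fun x _ => hasDerivAt_Hm_gauss k x)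
      (by
        convert! (integrable_poly_gauss (Hm (k + 1) * Hm (k + 1))).neg using 1
        ext x; simp; ring)
      (by
        convert! (integrable_poly_gauss (Polynomial.derivative (Hm (k + 1)) * Hm k)) using 1
        ext x; simp; ring)
      (by
        convert! (integrable_poly_gauss (Hm (k + 1) * Hm k)) using 1
        ext x; simp; ring)
    rw [Hm_deriv] at h
    have e1 : ∫ x : ℝ, ((Hm (k + 1)).eval x) ^ 2 * Real.exp (-x ^ 2 / 2) =
        - ∫ x : ℝ, (Hm (k + 1)).eval x * -((Hm (k + 1)).eval x * Real.exp (-x ^ 2 / 2)) := by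
      rw [← MeasureTheory.integral_neg]; congr 1; ext x; ring
    have e2 : ∫ x : ℝ, ((k + 1 : ℝ) • Hm k).eval x * ((Hm k).eval x * Real.exp (-x ^ 2 / 2)) =
        (k + 1) * ∫ x : ℝ, ((Hm k).eval x) ^ 2 * Real.exp (-x ^ 2 / 2) := by
      rw [← MeasureTheory.integral_const_mul]; congr 1; ext x; simp; ring
    rw [e1, h, neg_neg, e2, ih, Nat.factorial_succ]; push_cast; ring

lemma integrable_osc (k : ℕ) (ξ : ℝ) : MeasureTheory.Integrable (fun x : ℝ =>
    Complex.exp (-Complex.I * ((x * ξ : ℝ) : ℂ)) * ((x ^ k * Real.exp (-x ^ 2 / 2) : ℝ) : ℂ)) := by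
  have := (integrable_poly_gauss (Polynomial.X ^ k)).ofReal (𝕜 := ℂ)
  refine this.mono (by
    apply Continuous.aestronglyMeasurable; fun_prop) (Filter.Eventually.of_forall fun x => ?_)
  rw [norm_mul, show -Complex.I * ((x * ξ : ℝ) : ℂ) = ((-(x * ξ) : ℝ) : ℂ) * Complex.I by
    push_cast; ring, Complex.norm_exp_ofReal_mul_I, one_mul]
  simp

lemma fourier_mono_gauss (k : ℕ) (ξ : ℝ) :
    ∫ x : ℝ, Complex.exp (-Complex.I * ((x * ξ : ℝ) : ℂ)) *
        ((x ^ k * Real.exp (-x ^ 2 / 2) : ℝ) : ℂ) =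
      Real.sqrt (2 * Real.pi) * (-Complex.I) ^ k *
        (((Hm k).eval ξ * Real.exp (-ξ ^ 2 / 2) : ℝ) : ℂ) := by
  induction k generalizing ξ with
  | zero =>
    have := fourierIntegral_gaussian (b := 1 / 2) (by norm_num) (-ξ : ℂ)
    simp only [Hm_zero, Polynomial.eval_one, pow_zero, one_mul, mul_one]
    have e : (Real.sqrt (2 * Real.pi) : ℂ) = ((Real.pi : ℂ) / (1 / 2)) ^ (1 / 2 : ℂ) := by
      rw [Real.sqrt_eq_rpow, Complex.ofReal_cpow (by positivity)]
      push_cast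
      congr 1; ring
    rw [e]
    convert! this using 2
    · ext x; push_cast; congr 2 <;> ring
    · push_cast; congr 1; ring
  | succ k ih =>
    have h := (hasDerivAt_integral_of_dominated_loc_of_deriv_le (μ := MeasureTheory.volume)
      (F := fun (ξ : ℝ) (x : ℝ) => Complex.exp (-Complex.I * ((x * ξ : ℝ) : ℂ)) *
        ((x ^ k * Real.exp (-x ^ 2 / 2) : ℝ) : ℂ))
      (F' := fun (ξ : ℝ) (x : ℝ) => -Complex.I * (Complex.exp (-Complex.I * ((x * ξ : ℝ) : ℂ)) *
        ((x ^ (k + 1) * Real.exp (-x ^ 2 / 2) : ℝ) : ℂ)))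
      (x₀ := ξ) (s := Set.univ)
      (bound := fun x => ‖((Polynomial.X ^ (k + 1) : Polynomial ℝ).eval x * Real.exp (-x ^ 2 / 2))‖)
      Filter.univ_mem
      (Filter.Eventually.of_forall fun y => (integrable_osc k y).1)
      (integrable_osc k ξ)
      ((integrable_osc (k + 1) ξ).const_mul _).1
      (Filter.Eventually.of_forall fun x y _ => by
        rw [norm_mul, norm_mul, show -Complex.I * ((x * y : ℝ) : ℂ) =
          ((-(x * y) : ℝ) : ℂ) * Complex.I by push_cast; ring, Complex.norm_exp_ofReal_mul_I,
          Complex.norm_real]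
        simp)
      (integrable_poly_gauss _).norm
      (Filter.Eventually.of_forall fun x y _ => by
        have h1 : HasDerivAt (fun y : ℝ => -Complex.I * ((x * y : ℝ) : ℂ)) (-Complex.I * (x : ℂ)) y := by
          have := (((hasDerivAt_id y).const_mul x).ofReal_comp).const_mul (-Complex.I)
          simpa using this
        convert! (h1.cexp.mul_const ((x ^ k * Real.exp (-x ^ 2 / 2) : ℝ) : ℂ)) using 1
        push_cast; ring)).2
    have h2 : HasDerivAt (fun ξ : ℝ => Real.sqrt (2 * Real.pi) * (-Complex.I) ^ k *
        (((Hm k).eval ξ * Real.exp (-ξ ^ 2 / 2) : ℝ) : ℂ)) _ ξ :=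
      ((hasDerivAt_Hm_gauss k ξ).ofReal_comp).const_mul _
    simp_rw [ih] at h
    have h3 := h.unique h2
    rw [MeasureTheory.integral_const_mul] at h3
    have h4 := congrArg (fun z => Complex.I * z) h3
    simp only [← mul_assoc, mul_neg, Complex.I_mul_I, neg_neg, one_mul] at h4
    simp only [mul_assoc] at h4 ⊢
    rw [h4]
    push_cast; ring

open MeasureTheory in
lemma integral_euclid {n : ℕ} {F : Type*} [NormedAddCommGroup F] [NormedSpace ℝ F]
    (f : EuclideanSpace ℝ (Fin n) → F) :
    ∫ x, f x = ∫ y : Fin n → ℝ, f (WithLp.toLp 2 y) := by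
  have h := (EuclideanSpace.volume_preserving_symm_measurableEquiv_toLp (Fin n)).symm
  exact (h.integral_comp (MeasurableEquiv.measurableEmbedding _) f).symm

lemma integrand_expand {n : ℕ} (S : Finset (Fin n → ℕ)) (a : (Fin n → ℕ) → ℝ)
    (x ξ : EuclideanSpace ℝ (Fin n)) :
    Complex.exp (-Complex.I * (⟪x, ξ⟫ : ℝ)) *
      (((∑ I ∈ S, a I * ∏ j, x j ^ I j) * Real.exp (-‖x‖ ^ 2 / 2) : ℝ) : ℂ) =
    ∑ I ∈ S, (a I : ℂ) * ∏ j, (Complex.exp (-Complex.I * ((x j * ξ j : ℝ) : ℂ)) *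
        ((x j ^ I j * Real.exp (-x j ^ 2 / 2) : ℝ) : ℂ)) := by
  have h1 : Complex.exp (-Complex.I * (⟪x, ξ⟫ : ℝ)) =
      ∏ j, Complex.exp (-Complex.I * ((x j * ξ j : ℝ) : ℂ)) := by
    rw [← Complex.exp_sum, ← Finset.mul_sum]
    congr 2
    rw [PiLp.inner_apply]
    push_cast
    refine Finset.sum_congr rfl fun j _ => ?_
    simp [mul_comm]
  have h2 : Real.exp (-‖x‖ ^ 2 / 2) = ∏ j, Real.exp (-x j ^ 2 / 2) := by
    rw [← Real.exp_sum, EuclideanSpace.norm_sq_eq, ← Finset.sum_div, Finset.sum_neg_distrib]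
    simp
  rw [h1, h2, Finset.sum_mul]
  push_cast
  rw [Finset.mul_sum]
  refine Finset.sum_congr rfl fun I _ => ?_
  simp only [Finset.prod_mul_distrib]
  ring

open MeasureTheory in
lemma Fn_q {n : ℕ} (S : Finset (Fin n → ℕ)) (a : (Fin n → ℕ) → ℝ)
    (ξ : EuclideanSpace ℝ (Fin n)) :
    Fn (fun x : EuclideanSpace ℝ (Fin n) =>
      (((∑ I ∈ S, a I * ∏ j, x j ^ I j) * Real.exp (-‖x‖ ^ 2 / 2) : ℝ) : ℂ)) ξ =
    ∑ I ∈ S, (a I : ℂ) * ∏ j, (Real.sqrt (2 * Real.pi) * (-Complex.I) ^ (I j) *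
        (((Hm (I j)).eval (ξ j) * Real.exp (-ξ j ^ 2 / 2) : ℝ) : ℂ)) := by
  unfold Fn
  simp_rw [integrand_expand]
  rw [integral_euclid, integral_finsetSum]
  · refine Finset.sum_congr rfl fun I _ => ?_
    rw [integral_const_mul]
    congr 1
    simp_rw [← fourier_mono_gauss]
    exact integral_fintype_prod_volume_eq_prod (fun j (t : ℝ) =>
      (Complex.exp (-Complex.I * ((t * ξ j : ℝ) : ℂ)) *
        ((t ^ I j * Real.exp (-t ^ 2 / 2) : ℝ) : ℂ)))
  · intro I _
    refine Integrable.const_mul ?_ _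
    exact Integrable.fintype_prod (f := fun j (t : ℝ) =>
      (Complex.exp (-Complex.I * ((t * ξ j : ℝ) : ℂ)) *
        ((t ^ I j * Real.exp (-t ^ 2 / 2) : ℝ) : ℂ))) (fun j => integrable_osc _ _)

lemma Fn_q_bound {n : ℕ} (S : Finset (Fin n → ℕ)) (a : (Fin n → ℕ) → ℝ)
    (ξ : EuclideanSpace ℝ (Fin n)) (R : ℝ) (hR : 0 ≤ R) (hξ : R ≤ ‖ξ‖) :
    ‖Fn (fun x : EuclideanSpace ℝ (Fin n) =>
      (((∑ I ∈ S, a I * ∏ j, x j ^ I j) * Real.exp (-‖x‖ ^ 2 / 2) : ℝ) : ℂ)) ξ‖ ^ 2 ≤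
    (2 * Real.pi) ^ n * S.card * Real.exp (-(1 / 2) * R ^ 2) *
      ∑ I ∈ S, (a I) ^ 2 * ∏ j, ((Hm (I j)).eval (ξ j) ^ 2 * Real.exp (-ξ j ^ 2 / 2)) := by
  rw [Fn_q]
  have hexp : ∏ j, Real.exp (-ξ j ^ 2 / 2) ≤ Real.exp (-(1 / 2) * R ^ 2) := by
    rw [← Real.exp_sum, ← Finset.sum_div, Finset.sum_neg_distrib]
    have := EuclideanSpace.norm_sq_eq ξ
    simp only [Real.norm_eq_abs, sq_abs] at this
    rw [← this]
    apply Real.exp_le_exp.2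
    nlinarith
  have hpi : (0:ℝ) < 2 * Real.pi := by positivity
  calc _ ≤ (∑ I ∈ S, ‖(a I : ℂ) * ∏ j, (Real.sqrt (2 * Real.pi) * (-Complex.I) ^ (I j) *
        (((Hm (I j)).eval (ξ j) * Real.exp (-ξ j ^ 2 / 2) : ℝ) : ℂ))‖) ^ 2 := by
          gcongr; exact norm_sum_le _ _
    _ ≤ S.card * ∑ I ∈ S, ‖(a I : ℂ) * ∏ j, (Real.sqrt (2 * Real.pi) * (-Complex.I) ^ (I j) *
        (((Hm (I j)).eval (ξ j) * Real.exp (-ξ j ^ 2 / 2) : ℝ) : ℂ))‖ ^ 2 :=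
          sq_sum_le_card_mul_sum_sq
    _ = S.card * ∑ I ∈ S, (2 * Real.pi) ^ n * ((a I) ^ 2 *
          (∏ j, Real.exp (-ξ j ^ 2 / 2)) *
          ∏ j, ((Hm (I j)).eval (ξ j) ^ 2 * Real.exp (-ξ j ^ 2 / 2))) := by
        congr 1
        refine Finset.sum_congr rfl fun I _ => ?_
        rw [norm_mul, norm_prod, mul_pow, ← Finset.prod_pow, Complex.norm_real, Real.norm_eq_abs,
          sq_abs]
        have : ∀ j : Fin n, ‖(Real.sqrt (2 * Real.pi) * (-Complex.I) ^ (I j) *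
            (((Hm (I j)).eval (ξ j) * Real.exp (-ξ j ^ 2 / 2) : ℝ) : ℂ))‖ ^ 2 =
            (2 * Real.pi) * (Real.exp (-ξ j ^ 2 / 2) *
              ((Hm (I j)).eval (ξ j) ^ 2 * Real.exp (-ξ j ^ 2 / 2))) := by
          intro j
          rw [norm_mul, norm_mul, norm_pow, norm_neg, Complex.norm_I, one_pow, mul_one,
            Complex.norm_real, Complex.norm_real, mul_pow, Real.norm_eq_abs, sq_abs,
            Real.norm_eq_abs, sq_abs, Real.sq_sqrt hpi.le]
          ring
        simp_rw [this]
        rw [Finset.prod_mul_distrib]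
        nth_rewrite 2 [Finset.prod_mul_distrib]
        simp only [Finset.prod_const, Finset.card_univ, Fintype.card_fin]
        ring
    _ ≤ S.card * ∑ I ∈ S, (2 * Real.pi) ^ n * ((a I) ^ 2 *
          Real.exp (-(1 / 2) * R ^ 2) *
          ∏ j, ((Hm (I j)).eval (ξ j) ^ 2 * Real.exp (-ξ j ^ 2 / 2))) := by
        gcongr
    _ = _ := by
        rw [Finset.mul_sum, Finset.mul_sum]
        refine Finset.sum_congr rfl fun I _ => ?_
        ring

open MeasureTheory in
lemma Hprod_integrable {n : ℕ} (I : Fin n → ℕ) : Integrable (fun ξ : EuclideanSpace ℝ (Fin n) =>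
    ∏ j, ((Hm (I j)).eval (ξ j) ^ 2 * Real.exp (-ξ j ^ 2 / 2))) := by
  have h := (EuclideanSpace.volume_preserving_symm_measurableEquiv_toLp (Fin n))
  have h2 : Integrable (fun y : Fin n → ℝ =>
    ∏ j, ((Hm (I j)).eval (y j) ^ 2 * Real.exp (-y j ^ 2 / 2))) := by
    refine Integrable.fintype_prod (f := fun j (t : ℝ) =>
      ((Hm (I j)).eval t ^ 2 * Real.exp (-t ^ 2 / 2))) (fun j => ?_)
    have := integrable_poly_gauss ((Hm (I j)) ^ 2)
    simpa using this
  exact (h.integrable_comp_emb (MeasurableEquiv.measurableEmbedding _)).2 h2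

open MeasureTheory in
lemma Hprod_integral {n : ℕ} (I : Fin n → ℕ) : ∫ ξ : EuclideanSpace ℝ (Fin n),
    ∏ j, ((Hm (I j)).eval (ξ j) ^ 2 * Real.exp (-ξ j ^ 2 / 2)) =
    Real.sqrt (2 * Real.pi) ^ n * ∏ j, (Nat.factorial (I j) : ℝ) := by
  rw [integral_euclid]
  have := integral_fintype_prod_volume_eq_prod (fun j (t : ℝ) =>
      ((Hm (I j)).eval t ^ 2 * Real.exp (-t ^ 2 / 2)))
  simp_rw [integral_Hm_sq] at this
  rw [Finset.prod_mul_distrib] at this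
  simp only [Finset.prod_const, Finset.card_univ, Fintype.card_fin] at this
  rw [mul_comm, ← this]

lemma Fn_eq_fourier {n : ℕ} (f : EuclideanSpace ℝ (Fin n) → ℂ) (ζ : EuclideanSpace ℝ (Fin n)) :
    Fn f ((2 * Real.pi) • ζ) = FourierTransform.fourier f ζ := by
  rw [Real.fourier_eq']
  unfold Fn
  congr 1; ext x
  rw [inner_smul_right, smul_eq_mul]
  congr 2
  push_cast; ring

open MeasureTheory in
lemma integral_scale {n : ℕ} {F : Type*} [NormedAddCommGroup F] [NormedSpace ℝ F]
    (f : EuclideanSpace ℝ (Fin n) → F) :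
    ∫ ζ, f ((2 * Real.pi) • ζ) = ((1 / (2 * Real.pi) ^ n : ℝ)) • ∫ ξ, f ξ := by
  rw [Measure.integral_comp_smul]
  congr 1
  simp only [finrank_euclideanSpace, Fintype.card_fin]
  rw [abs_of_pos (by positivity), one_div]

lemma q_schwartz {n : ℕ} (S : Finset (Fin n → ℕ)) (a : (Fin n → ℕ) → ℝ) :
    ∃ G : SchwartzMap (EuclideanSpace ℝ (Fin n)) ℂ, ∀ x, G x =
      (((∑ I ∈ S, a I * ∏ j, x j ^ I j) * Real.exp (-‖x‖ ^ 2 / 2) : ℝ) : ℂ) := by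
  obtain ⟨G, hG⟩ := gauss_schwartz n
  have hcoord : ∀ j : Fin n, (fun x : EuclideanSpace ℝ (Fin n) => x j).HasTemperateGrowth :=
    fun j => (EuclideanSpace.proj (𝕜 := ℝ) j : EuclideanSpace ℝ (Fin n) →L[ℝ] ℝ).hasTemperateGrowth
  have hprod : ∀ (I : Fin n → ℕ) (s : Finset (Fin n)),
      (fun x : EuclideanSpace ℝ (Fin n) => ∏ j ∈ s, x j ^ I j).HasTemperateGrowth := by
    intro I s
    induction s using Finset.induction_on with
    | empty => simpa using Function.HasTemperateGrowth.const (1 : ℝ)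
    | insert j s hj ih =>
      simp_rw [Finset.prod_insert hj]
      exact ((hcoord j).pow (I j)).mul ih
  have hQ : (fun x : EuclideanSpace ℝ (Fin n) =>
      ∑ I ∈ S, a I * ∏ j, x j ^ I j).HasTemperateGrowth :=
    Function.HasTemperateGrowth.sum fun I _ =>
      (Function.HasTemperateGrowth.const (a I)).mul (hprod I _)
  refine ⟨(SchwartzMap.smulLeftCLM ℝ (fun x : EuclideanSpace ℝ (Fin n) =>
      ∑ I ∈ S, a I * ∏ j, x j ^ I j) G).postcompCLM Complex.ofRealCLM, fun x => ?_⟩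
  rw [SchwartzMap.postcompCLM_apply, SchwartzMap.smulLeftCLM_apply_apply hQ, hG]
  rfl

open FourierTransform in
theorem stmt11 (n : ℕ) (hn : 0 < n)
    (S : Finset (Fin n → ℕ)) (a : (Fin n → ℕ) → ℝ)
    (c η : ℝ) (hc : 0 < c) (hη : 0 < η) (hcη : 1 ≤ c / (2 * η))
    (χ : EuclideanSpace ℝ (Fin n) → ℝ) (hχ : ContDiff ℝ (⊤ : ℕ∞) χ)
    (hχ01 : ∀ ξ, χ ξ ∈ Set.Icc (0:ℝ) 1)
    (hχsupp : tsupport χ ⊆ Metric.closedBall 0 c)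
    (hχ1 : ∀ ξ ∈ Metric.closedBall (0 : EuclideanSpace ℝ (Fin n)) (c / 2), χ ξ = 1)
    (Q q : EuclideanSpace ℝ (Fin n) → ℝ)
    (hQ : Q = fun x => ∑ I ∈ S, a I * ∏ j, x j ^ I j)
    (hq : q = fun x => Q x * Real.exp (-‖x‖ ^ 2 / 2))
    (qcη : EuclideanSpace ℝ (Fin n) → ℂ)
    (hqcη : qcη = fun x => (1 / (2 * Real.pi) ^ n) *
      ∫ ξ : EuclideanSpace ℝ (Fin n),
        (χ (η • ξ) : ℂ) * Fn (fun y => (q y : ℂ)) ξ * Complex.exp (Complex.I * (⟪x, ξ⟫ : ℝ))) :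
    (∫ x : EuclideanSpace ℝ (Fin n), ‖qcη x - (q x : ℂ)‖ ^ 2) ≤
      Real.sqrt (2 * Real.pi) ^ n * (S.card : ℝ) *
        (∑ I ∈ S, (a I) ^ 2 * ∏ j, (Nat.factorial (I j) : ℝ)) *
        Real.exp (-(1 / 2) * (c / (2 * η)) ^ 2) := by
  have hpi : (0:ℝ) < 2 * Real.pi := by positivity
  obtain ⟨qS, hqS⟩ := q_schwartz S a
  have hqfun : (fun y => (q y : ℂ)) = (qS : EuclideanSpace ℝ (Fin n) → ℂ) := by
    ext x; rw [hqS, hq, hQ]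
  have hqfun2 : (fun y => (q y : ℂ)) = (fun x : EuclideanSpace ℝ (Fin n) =>
      (((∑ I ∈ S, a I * ∏ j, x j ^ I j) * Real.exp (-‖x‖ ^ 2 / 2) : ℝ) : ℂ)) := by
    ext x; rw [hq, hQ]
  -- the scaled cutoff
  have hχc : HasCompactSupport χ := HasCompactSupport.of_support_subset_isCompact
    (isCompact_closedBall (0 : EuclideanSpace ℝ (Fin n)) c)
    ((subset_tsupport χ).trans hχsupp)
  have hχt : χ.HasTemperateGrowth := hχc.hasTemperateGrowth hχ
  let L : EuclideanSpace ℝ (Fin n) →L[ℝ] EuclideanSpace ℝ (Fin n) :=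
    (η * (2 * Real.pi)) • ContinuousLinearMap.id ℝ _
  have hm : (fun ζ => χ (L ζ)).HasTemperateGrowth := hχt.comp L.hasTemperateGrowth
  have hL : ∀ ζ, L ζ = η • ((2 * Real.pi) • ζ) := fun ζ => by simp [L, smul_smul]
  let gS : SchwartzMap (EuclideanSpace ℝ (Fin n)) ℂ :=
    SchwartzMap.smulLeftCLM ℂ (fun ζ => χ (L ζ)) (𝓕 qS)
  have hgS : ∀ ζ, gS ζ = (χ (η • ((2 * Real.pi) • ζ)) : ℂ) *
      Fn (fun y => (q y : ℂ)) ((2 * Real.pi) • ζ) := by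
    intro ζ
    rw [SchwartzMap.smulLeftCLM_apply_apply hm, Fn_eq_fourier, hqfun, hL, SchwartzMap.fourier_coe]
    simp
  have hqc : ∀ x, qcη x = 𝓕⁻ gS x := by
    intro x
    rw [SchwartzMap.fourierInv_coe, Real.fourierInv_eq', hqcη]
    have := integral_scale (fun ξ : EuclideanSpace ℝ (Fin n) =>
      (χ (η • ξ) : ℂ) * Fn (fun y => (q y : ℂ)) ξ * Complex.exp (Complex.I * (⟪x, ξ⟫ : ℝ)))
    simp only [Complex.real_smul] at this
    push_cast at this
    simp only
    rw [← this]
    congr 1; ext ζ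
    rw [hgS, inner_smul_right, real_inner_comm, smul_eq_mul, mul_comm]
    congr 2
    push_cast; ring
  have hdiff : ∀ x, qcη x - (q x : ℂ) = 𝓕⁻ (gS - 𝓕 qS) x := by
    intro x
    have h1 : 𝓕⁻ (gS - 𝓕 qS) = 𝓕⁻ gS - qS := by
      have h2 : 𝓕⁻ gS = 𝓕⁻ ((gS - 𝓕 qS) + 𝓕 qS) := by rw [sub_add_cancel]
      rw [h2, FourierTransform.fourierInv_add, FourierTransform.fourierInv_fourier_eq,
        add_sub_cancel_right]
    rw [h1, sub_apply, hqc, ← hqfun]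
  have hplanch : (∫ x : EuclideanSpace ℝ (Fin n), ‖qcη x - (q x : ℂ)‖ ^ 2) =
      ∫ ζ, ‖(gS - 𝓕 qS) ζ‖ ^ 2 := by
    simp_rw [hdiff]
    rw [← SchwartzMap.integral_norm_sq_fourier, FourierTransform.fourier_fourierInv_eq]
  have hscale : (∫ ζ, ‖(gS - 𝓕 qS) ζ‖ ^ 2) = (1 / (2 * Real.pi) ^ n : ℝ) •
      ∫ ξ, ‖((χ (η • ξ) - 1 : ℝ) : ℂ) * Fn (fun y => (q y : ℂ)) ξ‖ ^ 2 := by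
    rw [← integral_scale (fun ξ : EuclideanSpace ℝ (Fin n) =>
      ‖((χ (η • ξ) - 1 : ℝ) : ℂ) * Fn (fun y => (q y : ℂ)) ξ‖ ^ 2)]
    congr 1; ext ζ
    rw [sub_apply, hgS, Fn_eq_fourier, hqfun, SchwartzMap.fourier_coe]
    congr 2
    push_cast; ring
  rw [hplanch, hscale, smul_eq_mul]
  have hR : 0 ≤ c / (2 * η) := by positivity
  have hbound : ∫ ξ, ‖((χ (η • ξ) - 1 : ℝ) : ℂ) * Fn (fun y => (q y : ℂ)) ξ‖ ^ 2 ≤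
      ∫ ξ : EuclideanSpace ℝ (Fin n), (2 * Real.pi) ^ n * S.card *
        Real.exp (-(1 / 2) * (c / (2 * η)) ^ 2) *
        ∑ I ∈ S, (a I) ^ 2 * ∏ j, ((Hm (I j)).eval (ξ j) ^ 2 * Real.exp (-ξ j ^ 2 / 2)) := by
    apply MeasureTheory.integral_mono_of_nonneg
    · exact Filter.Eventually.of_forall fun ξ => by positivity
    · exact (MeasureTheory.integrable_finsetSum _ fun I _ =>
        (Hprod_integrable I).const_mul _).const_mul _
    · refine Filter.Eventually.of_forall fun ξ => ?_
      rcases le_total ‖ξ‖ (c / (2 * η)) with h | h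
      · have h1 : χ (η • ξ) = 1 := by
          apply hχ1
          rw [mem_closedBall_zero_iff, norm_smul, Real.norm_eq_abs, abs_of_pos hη]
          calc η * ‖ξ‖ ≤ η * (c / (2 * η)) := by gcongr
            _ = c / 2 := by field_simp
        simp only [h1, sub_self, Complex.ofReal_zero, zero_mul, norm_zero]
        rw [zero_pow two_ne_zero]
        refine mul_nonneg (by positivity) (Finset.sum_nonneg fun I _ =>
          mul_nonneg (by positivity) (Finset.prod_nonneg fun j _ => by positivity))
      · refine le_trans ?_ (Fn_q_bound S a ξ _ hR h)
        rw [hqfun2]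
        beta_reduce
        rw [norm_mul, mul_pow]
        refine mul_le_of_le_one_left (by positivity) ?_
        rw [Complex.norm_real, Real.norm_eq_abs, sq_abs]
        have := hχ01 (η • ξ)
        nlinarith [this.1, this.2]
  calc _ ≤ (1 / (2 * Real.pi) ^ n : ℝ) * _ := mul_le_mul_of_nonneg_left hbound (by positivity)
    _ = _ := by
      rw [MeasureTheory.integral_const_mul, MeasureTheory.integral_finsetSum _ fun I _ =>
        (Hprod_integrable I).const_mul _]
      simp_rw [MeasureTheory.integral_const_mul, Hprod_integral]
      have : ∑ I ∈ S, a I ^ 2 * (Real.sqrt (2 * Real.pi) ^ n * ∏ j, (Nat.factorial (I j) : ℝ)) =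
          Real.sqrt (2 * Real.pi) ^ n * ∑ I ∈ S, a I ^ 2 * ∏ j, (Nat.factorial (I j) : ℝ) := by
        rw [Finset.mul_sum]
        exact Finset.sum_congr rfl fun I _ => by ring
      rw [this]
      field_simp

end
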